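/- arXiv:math/0410181 — 4 statements merged into one kernel-verified Lean document; each statement's English description precedes it below -/
import Mathlib

section
/- Let g : ℕ → ℝ satisfy g(0) = 0 and g(k) > 0 for all k ≥ 1. For 0 ≤ α < liminf_{k→∞} g(k) let ρ(α) = (Σ_{k≥0} k·α^k/(g(1)⋯g(k))) / (Σ_{k≥0} α^k/(g(1)⋯g(k))) be the mean of the probability measure μ_α. Then ρ is strictly increasing: for all real α₁, α₂ with 0 < α₁ < α₂ < liminf_{k→∞} g(k), one has ρ(α₁) < ρ(α₂). -/
/-!
The measures `μ_α` form an exponential family: passing from `α₁` to `α₂ > α₁` multiplies the weight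
of `k` by `t ^ k` with `t = α₂ / α₁ > 1`. If `m` is the mean of a weight `p` and `φ` is strictly
increasing, then `k - m` and `φ k - φ m` have the same sign, so `∑ (k - m) (φ k - φ m) p k > 0`.
As `∑ (k - m) p k = 0`, this says `∑ (k - m) (φ k * p k) > 0`: reweighting by `φ` raises the mean.
The exponential family is the case `φ x = t ^ x`, which makes sense also at a non-integer `m`.
-/

open Filter

theorem sub_mul_sub_pos_of_strictMono {R : Type*} [Ring R] [LinearOrder R] [IsStrictOrderedRing R]
    {φ : R → R} (hφ : StrictMono φ) {x y : R} (hxy : x ≠ y) :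
    0 < (x - y) * (φ x - φ y) := by
  rcases hxy.lt_or_gt with h | h
  · exact mul_pos_of_neg_of_neg (sub_neg.2 h) (sub_neg.2 (hφ h))
  · exact mul_pos (sub_pos.2 h) (sub_pos.2 (hφ h))

theorem summable_of_summable_natCast_mul {a : ℕ → ℝ} (ha : Summable fun k : ℕ ↦ (k : ℝ) * a k) :
    Summable a := by
  refine ha.norm.of_norm_bounded_eventually_nat ?_
  filter_upwards [eventually_ge_atTop 1] with k hk
  rw [norm_mul, Real.norm_natCast]
  exact le_mul_of_one_le_left (norm_nonneg _) (mod_cast hk)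

theorem exists_gt_eventually_le_of_ofReal_lt_liminf {g : ℕ → ℝ} {α : ℝ}
    (hα : ENNReal.ofReal α < liminf (fun k ↦ ENNReal.ofReal (g k)) atTop) :
    ∃ β > α, ∀ᶠ k in atTop, β ≤ g k := by
  obtain ⟨β, -, hαβ, hβ⟩ := ENNReal.lt_iff_exists_real_btwn.1 hα
  refine ⟨β, (ENNReal.ofReal_lt_ofReal_iff'.1 hαβ).1, ?_⟩
  filter_upwards [eventually_lt_of_lt_liminf hβ] with k hk
  exact (ENNReal.ofReal_lt_ofReal_iff'.1 hk).1.le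

section WeightedMean

variable {ι : Type*} {p f : ι → ℝ}

/-- The mean of `f` under the probability measure obtained by normalizing the weights `p`. The
weights are not required to have total mass `1`; the value is junk unless `p` and `f * p` are
summable and the total mass is nonzero. -/
noncomputable def weightedMean (p f : ι → ℝ) : ℝ :=
  (∑' i, f i * p i) / ∑' i, p i

theorem hasSum_sub_mul_weightedMean (hp : Summable p) (hfp : Summable fun i ↦ f i * p i)
    (hmass : ∑' i, p i ≠ 0) (m : ℝ) :
    HasSum (fun i ↦ (f i - m) * p i) ((weightedMean p f - m) * ∑' i, p i) := by
  have hsum := hfp.hasSum.sub (hp.hasSum.mul_left m)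
  rw [← div_mul_cancel₀ (∑' i, f i * p i) hmass, ← sub_mul] at hsum
  simpa only [weightedMean, sub_mul] using hsum

theorem weightedMean_lt_weightedMean_strictMono_mul {φ : ℝ → ℝ} (hφ : StrictMono φ)
    (hφ_pos : ∀ i, 0 < φ (f i)) (hp_nonneg : ∀ i, 0 ≤ p i)
    (hf : ∃ i j, 0 < p i ∧ 0 < p j ∧ f i ≠ f j)
    (hp : Summable p) (hfp : Summable fun i ↦ f i * p i)
    (hq : Summable fun i ↦ φ (f i) * p i) (hfq : Summable fun i ↦ f i * (φ (f i) * p i)) :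
    weightedMean p f < weightedMean (fun i ↦ φ (f i) * p i) f := by
  obtain ⟨i, j, hi, hj, hij⟩ := hf
  set m := weightedMean p f with hm
  have hp_mass : 0 < ∑' i, p i := hp.tsum_pos hp_nonneg i hi
  have hq_mass : 0 < ∑' i, φ (f i) * p i :=
    hq.tsum_pos (fun k ↦ mul_nonneg (hφ_pos _).le (hp_nonneg k)) i (mul_pos (hφ_pos _) hi)
  have hp_centered := hasSum_sub_mul_weightedMean hp hfp hp_mass.ne' m
  rw [← hm, sub_self, zero_mul] at hp_centered
  have hcov := (hasSum_sub_mul_weightedMean hq hfq hq_mass.ne' m).sub (hp_centered.mul_left (φ m))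
  have hterm (k : ι) : (f k - m) * (φ (f k) * p k) - φ m * ((f k - m) * p k) =
      (f k - m) * (φ (f k) - φ m) * p k := by ring
  simp only [hterm, mul_zero, sub_zero] at hcov
  have hcov_nonneg (k : ι) : 0 ≤ (f k - m) * (φ (f k) - φ m) * p k := by
    refine mul_nonneg ?_ (hp_nonneg k)
    rcases eq_or_ne (f k) m with h | h
    · simp [h]
    · exact (sub_mul_sub_pos_of_strictMono hφ h).le
  obtain ⟨k, hk, hkm⟩ : ∃ k, 0 < p k ∧ f k ≠ m := by
    by_cases h : f i = m
    · exact ⟨j, hj, fun hjm ↦ hij (h.trans hjm.symm)⟩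
    · exact ⟨i, hi, h⟩
  have hcov_pos := hcov.summable.tsum_pos hcov_nonneg k
    (mul_pos (sub_mul_sub_pos_of_strictMono hφ hkm) hk)
  rw [hcov.tsum_eq] at hcov_pos
  exact sub_pos.1 (pos_of_mul_pos_left hcov_pos hq_mass.le)

theorem strictMonoOn_weightedMean_mul_rpow {w : ι → ℝ} (hw : ∀ i, 0 ≤ w i)
    (hf : ∃ i j, 0 < w i ∧ 0 < w j ∧ f i ≠ f j) :
    StrictMonoOn (fun x : ℝ ↦ weightedMean (fun i ↦ w i * x ^ f i) f)
      {x | 0 < x ∧ Summable (fun i ↦ w i * x ^ f i) ∧ Summable fun i ↦ f i * (w i * x ^ f i)} := by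
  rintro x ⟨hx, hp, hfp⟩ y ⟨hy, hq, hfq⟩ hxy
  have hreweight (i : ι) : w i * y ^ f i = (y / x) ^ f i * (w i * x ^ f i) := by
    rw [mul_left_comm, ← Real.mul_rpow (by positivity) hx.le, div_mul_cancel₀ y hx.ne']
  simp only [hreweight] at hq hfq ⊢
  obtain ⟨i, j, hi, hj, hij⟩ := hf
  exact weightedMean_lt_weightedMean_strictMono_mul (φ := fun s ↦ (y / x) ^ s)
    (fun _ _ ↦ Real.rpow_lt_rpow_of_exponent_lt ((one_lt_div hx).2 hxy))
    (fun _ ↦ by positivity) (fun i ↦ mul_nonneg (hw i) (by positivity))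
    ⟨i, j, by positivity, by positivity, hij⟩ hp hfp hq hfq

end WeightedMean

section ZeroRange

variable {g : ℕ → ℝ} {α β : ℝ}

/-- The weight `w(k) = α ^ k / (g 1 ⋯ g k)` that the equilibrium measure `μ_α` of the zero-range
process with jump rates `g` gives, before normalization, to a site occupied by `k` particles. -/
noncomputable def zeroRangeWeight (g : ℕ → ℝ) (α : ℝ) (k : ℕ) : ℝ :=
  α ^ k / ∏ j ∈ Finset.Icc 1 k, g j

/-- The particle density `ρ(α)` of the zero-range process, i.e. the mean of `μ_α`. -/
noncomputable def zeroRangeDensity (g : ℕ → ℝ) (α : ℝ) : ℝ :=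
  weightedMean (zeroRangeWeight g α) (fun k ↦ (k : ℝ))

theorem prod_Icc_one_pos (hg : ∀ k, 1 ≤ k → 0 < g k) (k : ℕ) :
    0 < ∏ j ∈ Finset.Icc 1 k, g j :=
  Finset.prod_pos fun j hj ↦ hg j (Finset.mem_Icc.1 hj).1

theorem zeroRangeWeight_succ (g : ℕ → ℝ) (α : ℝ) (k : ℕ) :
    zeroRangeWeight g α (k + 1) = α / g (k + 1) * zeroRangeWeight g α k := by
  rw [zeroRangeWeight, zeroRangeWeight, Finset.prod_Icc_succ_top (by lia), pow_succ',
    mul_comm _ (g (k + 1)), mul_div_mul_comm]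

theorem summable_zeroRangeWeight (hαβ : |α| < β) (hβ : ∀ᶠ k in atTop, β ≤ g k) :
    Summable (zeroRangeWeight g α) := by
  have hβ_pos : 0 < β := (abs_nonneg α).trans_lt hαβ
  refine summable_of_ratio_norm_eventually_le ((div_lt_one hβ_pos).2 hαβ) ?_
  filter_upwards [(tendsto_add_atTop_nat 1).eventually hβ] with k hk
  rw [zeroRangeWeight_succ, norm_mul, norm_div, Real.norm_eq_abs α,
    Real.norm_of_nonneg (hβ_pos.le.trans hk)]
  gcongr

theorem summable_pow_mul_zeroRangeWeight (n : ℕ) (hαβ : |α| < β)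
    (hβ : ∀ᶠ k in atTop, β ≤ g k) :
    Summable fun k : ℕ ↦ (k : ℝ) ^ n * zeroRangeWeight g α k := by
  obtain ⟨γ, hαγ, hγβ⟩ := exists_between hαβ
  have hγ_pos : 0 < γ := (abs_nonneg α).trans_lt hαγ
  have hγ_summable : Summable (zeroRangeWeight g γ) :=
    summable_zeroRangeWeight (by rwa [abs_of_pos hγ_pos]) hβ
  have hratio : |α / γ| < 1 := by rwa [abs_div, abs_of_pos hγ_pos, div_lt_one hγ_pos]
  have htendsto := tendsto_pow_const_mul_const_pow_of_abs_lt_one n hratio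
  rw [← Nat.cofinite_eq_atTop] at htendsto
  refine (hγ_summable.norm.mul_tendsto_const htendsto).congr fun k ↦ ?_
  rw [zeroRangeWeight, zeroRangeWeight, div_pow]
  field_simp

theorem summable_pow_mul_zeroRangeWeight_of_lt_liminf (n : ℕ) (hα : 0 ≤ α)
    (hα_lt : ENNReal.ofReal α < liminf (fun k ↦ ENNReal.ofReal (g k)) atTop) :
    Summable fun k : ℕ ↦ (k : ℝ) ^ n * zeroRangeWeight g α k := by
  obtain ⟨β, hαβ, hβ⟩ := exists_gt_eventually_le_of_ofReal_lt_liminf hα_lt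
  exact summable_pow_mul_zeroRangeWeight n (by rwa [abs_of_nonneg hα]) hβ

theorem zeroRangeWeight_nonneg (hg : ∀ k, 1 ≤ k → 0 < g k) (hα : 0 ≤ α) (k : ℕ) :
    0 ≤ zeroRangeWeight g α k :=
  div_nonneg (pow_nonneg hα k) (prod_Icc_one_pos hg k).le

theorem zeroRangeWeight_le_zeroRangeWeight (hg : ∀ k, 1 ≤ k → 0 < g k) (hα : 0 ≤ α)
    (hαβ : α ≤ β) (k : ℕ) : zeroRangeWeight g α k ≤ zeroRangeWeight g β k :=
  div_le_div_of_nonneg_right (pow_le_pow_left₀ hα hαβ k) (prod_Icc_one_pos hg k).le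

theorem summable_natCast_mul_zeroRangeWeight_of_le (hg : ∀ k, 1 ≤ k → 0 < g k) (hα : 0 ≤ α)
    (hαβ : α ≤ β) (hβ : Summable fun k : ℕ ↦ (k : ℝ) * zeroRangeWeight g β k) :
    Summable fun k : ℕ ↦ (k : ℝ) * zeroRangeWeight g α k :=
  hβ.of_nonneg_of_le (fun k ↦ mul_nonneg k.cast_nonneg (zeroRangeWeight_nonneg hg hα k))
    fun k ↦ mul_le_mul_of_nonneg_left (zeroRangeWeight_le_zeroRangeWeight hg hα hαβ k) k.cast_nonneg

theorem strictMonoOn_zeroRangeDensity (hg : ∀ k, 1 ≤ k → 0 < g k) :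
    StrictMonoOn (zeroRangeDensity g)
      {α | 0 < α ∧ Summable fun k : ℕ ↦ (k : ℝ) * zeroRangeWeight g α k} := by
  have hw (k : ℕ) : 0 < (∏ j ∈ Finset.Icc 1 k, g j)⁻¹ := inv_pos.2 (prod_Icc_one_pos hg k)
  have hweight (α : ℝ) : zeroRangeWeight g α =
      fun k : ℕ ↦ (∏ j ∈ Finset.Icc 1 k, g j)⁻¹ * α ^ (k : ℝ) := by
    ext k
    rw [zeroRangeWeight, Real.rpow_natCast, div_eq_inv_mul]
  have hmono := strictMonoOn_weightedMean_mul_rpow (f := fun k : ℕ ↦ (k : ℝ))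
    (fun k ↦ (hw k).le) ⟨0, 1, hw 0, hw 1, by simp⟩
  simp only [← hweight] at hmono
  refine hmono.mono fun α ⟨hα, hsum⟩ ↦ ⟨hα, ?_, ?_⟩
  · simpa only [hweight] using summable_of_summable_natCast_mul hsum
  · simpa only [hweight] using hsum

end ZeroRange

theorem density_strictly_increasing_general
    {g : ℕ → ℝ} (hg : ∀ k, 1 ≤ k → 0 < g k) {ρ : ℝ → ℝ}
    (hρ : ∀ α : ℝ, ρ α =
      (∑' k : ℕ, (k : ℝ) * α ^ k / ∏ j ∈ Finset.Icc 1 k, g j) /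
      (∑' k : ℕ, α ^ k / ∏ j ∈ Finset.Icc 1 k, g j))
    {α₁ α₂ : ℝ} (h₁ : 0 < α₁) (h₁₂ : α₁ < α₂)
    (h₂ : Summable fun k : ℕ ↦ (k : ℝ) * α₂ ^ k / ∏ j ∈ Finset.Icc 1 k, g j) :
    ρ α₁ < ρ α₂ := by
  have hdensity (α : ℝ) : ρ α = zeroRangeDensity g α := by
    simp only [hρ, zeroRangeDensity, weightedMean, zeroRangeWeight, mul_div_assoc]
  have hsum₂ : Summable fun k : ℕ ↦ (k : ℝ) * zeroRangeWeight g α₂ k := by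
    simpa only [zeroRangeWeight, mul_div_assoc] using h₂
  have hsum₁ := summable_natCast_mul_zeroRangeWeight_of_le hg h₁.le h₁₂.le hsum₂
  rw [hdensity, hdensity]
  exact strictMonoOn_zeroRangeDensity hg ⟨h₁, hsum₁⟩ ⟨h₁.trans h₁₂, hsum₂⟩ h₁₂

/-- Let `g : ℕ → ℝ` satisfy `g 0 = 0` and `g k > 0` for `k ≥ 1`.  For
`0 ≤ α < liminf g` let `ρ α = (Σ_k k·α^k/(g 1⋯g k)) / (Σ_k α^k/(g 1⋯g k))` be the mean of
the probability measure `μ_α`.  Then `ρ` is strictly increasing: for all real `α₁, α₂`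
with `0 < α₁ < α₂ < liminf_{k→∞} g k`, one has `ρ α₁ < ρ α₂`. -/
theorem density_strictly_increasing
    (g : ℕ → ℝ) (hg0 : g 0 = 0) (hgpos : ∀ k : ℕ, 1 ≤ k → 0 < g k)
    (ρ : ℝ → ℝ)
    (hρ : ∀ α : ℝ, ρ α =
      (∑' k : ℕ, (k : ℝ) * α ^ k / ∏ j ∈ Finset.Icc 1 k, g j) /
      (∑' k : ℕ, α ^ k / ∏ j ∈ Finset.Icc 1 k, g j))
    (α₁ α₂ : ℝ) (h₁ : 0 < α₁) (h₁₂ : α₁ < α₂)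
    (h₂ : ENNReal.ofReal α₂ <
      Filter.liminf (fun k : ℕ => ENNReal.ofReal (g k)) Filter.atTop) :
    ρ α₁ < ρ α₂ := by
  have hmoment := summable_pow_mul_zeroRangeWeight_of_lt_liminf 1 (h₁.trans h₁₂).le h₂
  exact density_strictly_increasing_general hgpos hρ h₁ h₁₂
    (by simpa only [pow_one, zeroRangeWeight, mul_div_assoc] using hmoment)
end

section
/- Assume in addition that k ↦ g(k)/k is nonincreasing on {k ≥ 1} (part of Assumption (ID)). Define the probability measure μ'_α on ℕ by μ'_α(0) = 0 and μ'_α(k) = α^{k−1}/(Z'_α · g(1)⋯g(k−1)) for k ≥ 1, where Z'_α = Σ_{k≥1} α^{k−1}/(g(1)⋯g(k−1)) is the normalization. Then μ'_α is stochastically dominated by the palm marginal μ⁰_α: for every m ∈ ℕ, Σ_{k≥m} μ'_α(k) ≤ Σ_{k≥m} μ⁰_α(k). -/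
/-!
Likelihood-ratio domination implies stochastic domination: if `a j * b i ≤ a i * b j` for all
`i ≤ j`, then summing over `i` outside and `j` inside an upper set compares the normalized tails.
Up to normalization `μ'_α` is the shift `k ↦ w (k - 1)` and the palm marginal is `k ↦ k * w k`;
their ratio is `k * w k / w (k - 1) = α * k / g k`, which is nondecreasing because `g k / k` is
nonincreasing.
-/

/-- The likelihood-ratio order on weights: the ratio `b / a` is nondecreasing. It is stated without
division, so that both weights may vanish. -/
def LikelihoodRatioLE {ι : Type*} [LE ι] (a b : ι → ℝ) : Prop :=
  ∀ ⦃i j⦄, i ≤ j → a j * b i ≤ a i * b j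

/-- The weight `a` rescaled to total mass one; it is zero if `a` is not summable or has sum zero. -/
noncomputable def normalizedWeight {ι : Type*} (a : ι → ℝ) (i : ι) : ℝ :=
  a i / ∑' j, a j

/-- The weight of `n + 1` when `n` has weight `f`: one particle is added to the site. -/
def addParticle (f : ℕ → ℝ) : ℕ → ℝ
  | 0 => 0
  | k + 1 => f k

/-- The size-biased weight; once normalized it is the palm marginal of the law with weight `f`. -/
def sizeBias (f : ℕ → ℝ) (k : ℕ) : ℝ :=
  k * f k

/-- The one-site weight of the zero range process with jump rate `g` and fugacity `α`. -/
noncomputable def siteWeight (g : ℕ → ℝ) (α : ℝ) (k : ℕ) : ℝ :=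
  α ^ k / ∏ j ∈ Finset.Icc 1 k, g j

section LikelihoodRatio

variable {ι : Type*} [LinearOrder ι] {a b : ι → ℝ} {s : Set ι}

theorem LikelihoodRatioLE.tsum_mul_tsum_compl_le (h : LikelihoodRatioLE a b) (hs : IsUpperSet s)
    (ha : Summable a) (hb : Summable b) :
    (∑' j : s, a j) * ∑' i : ↥sᶜ, b i ≤ (∑' j : s, b j) * ∑' i : ↥sᶜ, a i := by
  have ha_in := (ha.subtype s).norm
  have ha_out := (ha.subtype sᶜ).norm
  have hb_in := (hb.subtype s).norm
  have hb_out := (hb.subtype sᶜ).norm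
  have hab := summable_mul_of_summable_norm ha_in hb_out
  have hba := summable_mul_of_summable_norm hb_in ha_out
  have hle : ∀ p : s × ↥sᶜ, a p.1 * b p.2 ≤ b p.1 * a p.2 := fun ⟨j, i⟩ ↦ by
    have hij : (i : ι) ≤ j := le_of_not_ge fun hji ↦ i.2 (hs hji j.2)
    simpa only [mul_comm (b j)] using h hij
  calc (∑' j : s, a j) * ∑' i : ↥sᶜ, b i
      = ∑' p : s × ↥sᶜ, a p.1 * b p.2 := tsum_mul_tsum_of_summable_norm ha_in hb_out
    _ ≤ ∑' p : s × ↥sᶜ, b p.1 * a p.2 := hab.tsum_le_tsum hle hba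
    _ = (∑' j : s, b j) * ∑' i : ↥sᶜ, a i := (tsum_mul_tsum_of_summable_norm hb_in ha_out).symm

theorem LikelihoodRatioLE.tsum_normalizedWeight_le (h : LikelihoodRatioLE a b)
    (hs : IsUpperSet s) (ha : Summable a) (hb : Summable b) (ha_pos : 0 < ∑' i, a i)
    (hb_pos : 0 < ∑' i, b i) :
    ∑' i : s, normalizedWeight a i ≤ ∑' i : s, normalizedWeight b i := by
  simp only [normalizedWeight, tsum_div_const]
  rw [div_le_div_iff₀ ha_pos hb_pos, ← ha.tsum_subtype_add_tsum_subtype_compl s,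
    ← hb.tsum_subtype_add_tsum_subtype_compl s]
  linarith [h.tsum_mul_tsum_compl_le hs ha hb]

end LikelihoodRatio

section AddParticle

variable {f : ℕ → ℝ}

theorem likelihoodRatioLE_addParticle_sizeBias (hf : ∀ k, 0 < f k)
    (hmono : Monotone fun k : ℕ ↦ (k + 1) * f (k + 1) / f k) :
    LikelihoodRatioLE (addParticle f) (sizeBias f) := by
  rintro (_ | i) (_ | j) hij
  · simp [addParticle]
  · simp [addParticle, sizeBias]
  · omega
  · have hratio := hmono (Nat.le_of_succ_le_succ hij)
    rw [div_le_div_iff₀ (hf i) (hf j)] at hratio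
    simp only [addParticle, sizeBias, Nat.cast_succ]
    linarith

theorem summable_of_summable_sizeBias (h : Summable (sizeBias f)) : Summable f := by
  refine .of_norm_bounded_eventually_nat h.norm ?_
  filter_upwards [Filter.eventually_ge_atTop 1] with k hk
  rw [sizeBias, norm_mul, Real.norm_natCast]
  exact le_mul_of_one_le_left (norm_nonneg _) (mod_cast hk)

theorem summable_addParticle (h : Summable f) : Summable (addParticle f) :=
  (summable_nat_add_iff 1).1 h

theorem addParticle_nonneg (hf : ∀ k, 0 ≤ f k) : ∀ k, 0 ≤ addParticle f k
  | 0 => le_rfl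
  | k + 1 => hf k

theorem tsum_normalizedWeight_addParticle_le_sizeBias (hf : ∀ k, 0 < f k)
    (hmono : Monotone fun k : ℕ ↦ (k + 1) * f (k + 1) / f k) (hsum : Summable (sizeBias f))
    {s : Set ℕ} (hs : IsUpperSet s) :
    ∑' k : s, normalizedWeight (addParticle f) k ≤ ∑' k : s, normalizedWeight (sizeBias f) k := by
  have hadd := summable_addParticle (summable_of_summable_sizeBias hsum)
  refine (likelihoodRatioLE_addParticle_sizeBias hf hmono).tsum_normalizedWeight_le hs hadd hsum
    (hadd.tsum_pos (addParticle_nonneg fun k ↦ (hf k).le) 1 (hf 0))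
    (hsum.tsum_pos (fun k ↦ mul_nonneg k.cast_nonneg (hf k).le) 1 ?_)
  simpa [sizeBias] using hf 1

end AddParticle

theorem summable_pow_smul_of_ratio_norm_eventually_le {E : Type*} [SeminormedAddCommGroup E]
    [NormedSpace ℝ E] [CompleteSpace E] {f : ℕ → E} {r : ℝ} (hr : r < 1)
    (h : ∀ᶠ n in Filter.atTop, ‖f (n + 1)‖ ≤ r * ‖f n‖) (p : ℕ) :
    Summable fun n : ℕ ↦ (n : ℝ) ^ p • f n := by
  obtain ⟨q, hrq, hq⟩ := exists_between hr
  have hlim : Filter.Tendsto (fun n : ℕ ↦ (((n + 1 : ℕ) : ℝ) / n) ^ p * r) Filter.atTop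
      (nhds r) := by
    simpa using (((tendsto_natCast_div_add_atTop (1 : ℝ)).inv₀ one_ne_zero).pow p).mul_const r
  refine summable_of_ratio_norm_eventually_le hq ?_
  filter_upwards [h, hlim.eventually_le_const hrq, Filter.eventually_gt_atTop 0]
    with n hn hpow hn_pos
  have hpow' : ((n + 1 : ℕ) : ℝ) ^ p * r ≤ q * (n : ℝ) ^ p := by
    rwa [div_pow, div_mul_eq_mul_div, div_le_iff₀ (by positivity)] at hpow
  simp only [norm_smul, norm_pow, Real.norm_natCast]
  calc ((n + 1 : ℕ) : ℝ) ^ p * ‖f (n + 1)‖ ≤ ((n + 1 : ℕ) : ℝ) ^ p * (r * ‖f n‖) := by gcongr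
    _ = ((n + 1 : ℕ) : ℝ) ^ p * r * ‖f n‖ := by ring
    _ ≤ q * (n : ℝ) ^ p * ‖f n‖ := by gcongr
    _ = q * ((n : ℝ) ^ p * ‖f n‖) := by ring

section SiteWeight

variable {g : ℕ → ℝ} {α : ℝ}

theorem siteWeight_succ (g : ℕ → ℝ) (α : ℝ) (k : ℕ) :
    siteWeight g α (k + 1) = α / g (k + 1) * siteWeight g α k := by
  rw [siteWeight, siteWeight, Finset.prod_Icc_succ_top (by omega), pow_succ]
  ring

theorem siteWeight_pos (hg : ∀ k, 1 ≤ k → 0 < g k) (hα : 0 < α) (k : ℕ) :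
    0 < siteWeight g α k :=
  div_pos (pow_pos hα k) (Finset.prod_pos fun j hj ↦ hg j (Finset.mem_Icc.1 hj).1)

theorem monotone_succ_mul_siteWeight_ratio (hg : ∀ k, 1 ≤ k → 0 < g k)
    (hanti : ∀ k : ℕ, 1 ≤ k → g (k + 1) / ((k : ℝ) + 1) ≤ g k / (k : ℝ)) (hα : 0 < α) :
    Monotone fun k : ℕ ↦ (k + 1) * siteWeight g α (k + 1) / siteWeight g α k := by
  have hratio (k : ℕ) : (k + 1) * siteWeight g α (k + 1) / siteWeight g α k =
      α / (g (k + 1) / ((k + 1 : ℕ) : ℝ)) := by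
    have := (siteWeight_pos hg hα k).ne'
    rw [siteWeight_succ]
    push_cast
    field_simp
  refine monotone_nat_of_le_succ fun k ↦ ?_
  have hpos := hg (k + 2) (by omega)
  rw [hratio, hratio]
  exact div_le_div_of_nonneg_left hα.le (by positivity) (mod_cast hanti (k + 1) (by omega))

theorem exists_eventually_norm_siteWeight_succ_le (hα : 0 ≤ α)
    (hlim : ENNReal.ofReal α <
      Filter.liminf (fun k : ℕ ↦ ENNReal.ofReal (g k)) Filter.atTop) :
    ∃ r < 1, ∀ᶠ k in Filter.atTop, ‖siteWeight g α (k + 1)‖ ≤ r * ‖siteWeight g α k‖ := by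
  obtain ⟨β, hαβ, hβ⟩ := ENNReal.lt_iff_exists_nnreal_btwn.1 hlim
  have hαβ : α < β := (ENNReal.ofReal_lt_iff_lt_toReal hα ENNReal.coe_ne_top).1 hαβ
  have hβ_pos : (0 : ℝ) < β := hα.trans_lt hαβ
  refine ⟨α / β, (div_lt_one hβ_pos).2 hαβ, ?_⟩
  have hevent := Filter.eventually_lt_of_lt_liminf hβ
  filter_upwards [(Filter.tendsto_add_atTop_nat 1).eventually hevent] with k hk
  have hβg : (β : ℝ) < g (k + 1) := (ENNReal.lt_ofReal_iff_toReal_lt ENNReal.coe_ne_top).1 hk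
  have hg_pos := hβ_pos.trans hβg
  rw [siteWeight_succ, norm_mul, Real.norm_of_nonneg (by positivity)]
  gcongr

theorem summable_sizeBias_siteWeight (hα : 0 ≤ α)
    (hlim : ENNReal.ofReal α <
      Filter.liminf (fun k : ℕ ↦ ENNReal.ofReal (g k)) Filter.atTop) :
    Summable (sizeBias (siteWeight g α)) := by
  obtain ⟨r, hr, hratio⟩ := exists_eventually_norm_siteWeight_succ_le hα hlim
  unfold sizeBias
  simpa only [pow_one, smul_eq_mul] using
    summable_pow_smul_of_ratio_norm_eventually_le hr hratio 1

end SiteWeight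

theorem stochastic_domination_of_primed_measure_general
    (g : ℕ → ℝ) (hgpos : ∀ k : ℕ, 1 ≤ k → 0 < g k)
    (hID : ∀ k : ℕ, 1 ≤ k → g (k + 1) / ((k : ℝ) + 1) ≤ g k / (k : ℝ))
    (α : ℝ) (hα0 : 0 < α)
    (w : ℕ → ℝ) (hw : ∀ k : ℕ, w k = α ^ k / ∏ j ∈ Finset.Icc 1 k, g j)
    (hsum : Summable fun k : ℕ => (k : ℝ) * w k)
    (Z : ℝ) (hZ : Z = ∑' k : ℕ, w k)
    (ρ : ℝ) (hρ : ρ = ∑' k : ℕ, (k : ℝ) * (w k / Z))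
    (Z' : ℝ) (hZ' : Z' = ∑' k : ℕ,
      if 1 ≤ k then α ^ (k - 1) / ∏ j ∈ Finset.Icc 1 (k - 1), g j else 0)
    (μ' : ℕ → ℝ) (hμ' : ∀ k : ℕ, μ' k =
      if 1 ≤ k then α ^ (k - 1) / (Z' * ∏ j ∈ Finset.Icc 1 (k - 1), g j) else 0)
    (μ0 : ℕ → ℝ) (hμ0 : ∀ k : ℕ, μ0 k = ((k : ℝ) / ρ) * (w k / Z)) :
    ∀ m : ℕ, (∑' k : ℕ, if m ≤ k then μ' k else 0) ≤
      ∑' k : ℕ, if m ≤ k then μ0 k else 0 := by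
  intro m
  obtain rfl : w = siteWeight g α := funext hw
  have hpos := siteWeight_pos hgpos hα0
  have hZ_pos : 0 < Z :=
    hZ ▸ (summable_of_summable_sizeBias hsum).tsum_pos (fun k ↦ (hpos k).le) 0 (hpos 0)
  have hρZ : ρ * Z = ∑' k, sizeBias (siteWeight g α) k := by
    simp only [hρ, ← mul_div_assoc, tsum_div_const, sizeBias]
    exact div_mul_cancel₀ _ hZ_pos.ne'
  have hZ'_eq : Z' = ∑' k, addParticle (siteWeight g α) k :=
    hZ'.trans (tsum_congr fun k ↦ by cases k <;> simp [addParticle, siteWeight])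
  have hμ'_eq : μ' = normalizedWeight (addParticle (siteWeight g α)) := by
    ext (_ | k)
    · simp [hμ', normalizedWeight, addParticle]
    · rw [normalizedWeight, ← hZ'_eq]
      simp [hμ', addParticle, siteWeight, div_div, mul_comm]
  have hμ0_eq : μ0 = normalizedWeight (sizeBias (siteWeight g α)) := by
    ext k
    rw [hμ0, normalizedWeight, ← hρZ, div_mul_div_comm, sizeBias]
  have hdom := tsum_normalizedWeight_addParticle_le_sizeBias hpos
    (monotone_succ_mul_siteWeight_ratio hgpos hID hα0) hsum (isUpperSet_Ici m)
  rw [← hμ'_eq, ← hμ0_eq] at hdom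
  simpa only [tsum_subtype, Set.indicator_apply, Set.mem_Ici] using hdom

/-- Assume `k ↦ g k / k` is nonincreasing on `{k ≥ 1}` (part of
Assumption (ID)).  With `w k = α^k/(g 1 ⋯ g k)`, `Z_α = Σ_k w k`, `μ_α k = w k / Z_α`,
`ρ = Σ_k k μ_α k`, define the probability measure `μ'_α` on `ℕ` by `μ'_α 0 = 0` and
`μ'_α k = α^(k-1)/(Z'_α · g 1 ⋯ g (k-1))` for `k ≥ 1`, where
`Z'_α = Σ_{k ≥ 1} α^(k-1)/(g 1 ⋯ g (k-1))`.  Then `μ'_α` is stochastically dominated by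
the palm marginal `μ0_α k = (k/ρ) μ_α k`: for every `m : ℕ`,
`Σ_{k ≥ m} μ'_α k ≤ Σ_{k ≥ m} μ0_α k`. -/
theorem stochastic_domination_of_primed_measure
    (g : ℕ → ℝ) (hg0 : g 0 = 0) (hgpos : ∀ k : ℕ, 1 ≤ k → 0 < g k)
    (hID : ∀ k : ℕ, 1 ≤ k → g (k + 1) / ((k : ℝ) + 1) ≤ g k / (k : ℝ))
    (α : ℝ) (hα0 : 0 < α)
    (hα : ENNReal.ofReal α <
      Filter.liminf (fun k : ℕ => ENNReal.ofReal (g k)) Filter.atTop)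
    (w : ℕ → ℝ) (hw : ∀ k : ℕ, w k = α ^ k / ∏ j ∈ Finset.Icc 1 k, g j)
    (Z : ℝ) (hZ : Z = ∑' k : ℕ, w k)
    (ρ : ℝ) (hρ : ρ = ∑' k : ℕ, (k : ℝ) * (w k / Z))
    (Z' : ℝ) (hZ' : Z' = ∑' k : ℕ,
      if 1 ≤ k then α ^ (k - 1) / ∏ j ∈ Finset.Icc 1 (k - 1), g j else 0)
    (μ' : ℕ → ℝ) (hμ' : ∀ k : ℕ, μ' k =
      if 1 ≤ k then α ^ (k - 1) / (Z' * ∏ j ∈ Finset.Icc 1 (k - 1), g j) else 0)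
    (μ0 : ℕ → ℝ) (hμ0 : ∀ k : ℕ, μ0 k = ((k : ℝ) / ρ) * (w k / Z)) :
    ∀ m : ℕ, (∑' k : ℕ, if m ≤ k then μ' k else 0) ≤
      ∑' k : ℕ, if m ≤ k then μ0 k else 0 :=
  stochastic_domination_of_primed_measure_general g hgpos hID α hα0 w hw
    ((funext hw : w = siteWeight g α) ▸ summable_sizeBias_siteWeight hα0.le hα)
    Z hZ ρ hρ Z' hZ' μ' hμ' μ0 hμ0
end

section
/- Let k ∈ ℤ^d with k ≠ 0 and let ψ : Ω → ℝ be bounded and measurable. Then ∫ g(η_k) ψ(η) dQ_α(η) = α ∫ ψ(η + δ_k) dQ_α(η), where (η + δ_k)_i = η_i + 1 if i = k and η_i otherwise. -/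
open MeasureTheory

/-!
Resampling the coordinate `η k` independently of the others does not change a product measure.
Hence an identity `h • μ_k = a • T_* μ_k` for the single marginal at `k` lifts to the whole product:
weighting by `h (η k)` amounts, up to the factor `a`, to applying `T` to the coordinate `η k`.
The weights `w n = α ^ n / (g 1 ⋯ g n)` satisfy `g (n + 1) w (n + 1) = α w n`, which together with
`g 0 = 0` is this one-site identity for `h = g`, `a = α` and `T n = n + 1`.
-/

open Measure Function
open scoped ENNReal

section ProductMeasure

variable {ι : Type*} {X : ι → Type*} [∀ i, MeasurableSpace (X i)]
  {μ : ∀ i, Measure (X i)} [∀ i, IsProbabilityMeasure (μ i)]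

lemma eq_infinitePi_of_forall_cylinder_singleton [∀ i, Countable (X i)]
    [∀ i, MeasurableSingletonClass (X i)] {Q : Measure (∀ i, X i)}
    (hQ : ∀ (s : Finset ι) (a : ∀ i, X i), Q {η | ∀ i ∈ s, η i = a i} = ∏ i ∈ s, μ i {a i}) :
    Q = infinitePi μ := by
  refine IsProjectiveLimit.unique (fun s ↦ ?_) (isProjectiveLimit_infinitePi μ)
  refine ext_of_singleton fun b ↦ ?_
  have hX (i : ι) : Nonempty (X i) := nonempty_of_isProbabilityMeasure (μ i)
  obtain ⟨a, rfl⟩ : ∃ a : ∀ i, X i, s.restrict a = b := Subtype.surjective_restrict _ b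
  have hpre : s.restrict ⁻¹' {s.restrict a} = {η : ∀ i, X i | ∀ i ∈ s, η i = a i} := by
    ext η
    simp [funext_iff]
  rw [map_apply (Finset.measurable_restrict s) (measurableSet_singleton _), hpre, hQ, pi_singleton]
  exact (Finset.prod_coe_sort s fun i ↦ μ i {a i}).symm

variable [DecidableEq ι]

lemma measurePreserving_update_infinitePi (k : ι) :
    MeasurePreserving (fun p : X k × (∀ i, X i) ↦ update p.2 k p.1)
      ((μ k).prod (infinitePi μ)) (infinitePi μ) := by
  have hmeas : Measurable fun p : X k × (∀ i, X i) ↦ update p.2 k p.1 :=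
    measurable_update'.comp measurable_swap
  refine ⟨hmeas, eq_infinitePi μ fun s t ht ↦ ?_⟩
  rw [map_apply hmeas (.pi s.countable_toSet fun i _ ↦ ht i)]
  by_cases hk : k ∈ s
  · have hpre : (fun p : X k × (∀ i, X i) ↦ update p.2 k p.1) ⁻¹' Set.pi s t =
        t k ×ˢ Set.pi ↑(s.erase k) t := by
      ext ⟨x, η⟩
      simp only [Set.mem_preimage, Set.mem_pi, Set.mem_prod, SetLike.mem_coe]
      grind
    rw [hpre, prod_prod, infinitePi_pi μ fun i _ ↦ ht i,
      Finset.mul_prod_erase s (fun i ↦ μ i (t i)) hk]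
  · have hpre : (fun p : X k × (∀ i, X i) ↦ update p.2 k p.1) ⁻¹' Set.pi s t =
        Set.univ ×ˢ Set.pi s t := by
      ext ⟨x, η⟩
      simp only [Set.mem_preimage, Set.mem_pi, Set.mem_prod, SetLike.mem_coe]
      grind
    rw [hpre, prod_prod, infinitePi_pi μ fun i _ ↦ ht i, measure_univ, one_mul]

lemma measurable_update_comp_eval {k : ι} {T : X k → X k} (hT : Measurable T) :
    Measurable fun η : ∀ i, X i ↦ update η k (T (η k)) :=
  measurable_update'.comp (measurable_id.prodMk (hT.comp (measurable_pi_apply k)))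

lemma lintegral_infinitePi_eq_lintegral_lintegral_update (k : ι) {f : (∀ i, X i) → ℝ≥0∞}
    (hf : Measurable f) :
    ∫⁻ η, f η ∂infinitePi μ = ∫⁻ η, ∫⁻ x, f (update η k x) ∂μ k ∂infinitePi μ := by
  have hresample := measurePreserving_update_infinitePi (μ := μ) k
  rw [← hresample.lintegral_comp hf]
  exact lintegral_prod_symm' _ (hf.comp hresample.measurable)

theorem infinitePi_withDensity_eval_eq_smul_map_update {k : ι} {h : X k → ℝ≥0∞} (hh : Measurable h)
    {T : X k → X k} (hT : Measurable T) {a : ℝ≥0∞}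
    (hμ : (μ k).withDensity h = a • (μ k).map T) :
    (infinitePi μ).withDensity (fun η ↦ h (η k)) =
      a • (infinitePi μ).map fun η ↦ update η k (T (η k)) := by
  have hhk : Measurable fun η : ∀ i, X i ↦ h (η k) := hh.comp (measurable_pi_apply k)
  have hTk : Measurable fun η : ∀ i, X i ↦ update η k (T (η k)) := measurable_update_comp_eval hT
  refine ext_of_lintegral _ fun f hf ↦ ?_
  have hone_site (η : ∀ i, X i) :
      ∫⁻ x, h x * f (update η k x) ∂μ k = a * ∫⁻ x, f (update η k (T x)) ∂μ k := by
    have hfη : Measurable fun x ↦ f (update η k x) := hf.comp (measurable_update η)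
    rw [← lintegral_map hfη hT, ← smul_eq_mul, ← lintegral_smul_measure, ← hμ,
      lintegral_withDensity_eq_lintegral_mul _ hh hfη]
    rfl
  calc ∫⁻ η, f η ∂(infinitePi μ).withDensity (fun η ↦ h (η k))
      = ∫⁻ η, h (η k) * f η ∂infinitePi μ := lintegral_withDensity_eq_lintegral_mul _ hhk hf
    _ = ∫⁻ η, ∫⁻ x, h x * f (update η k x) ∂μ k ∂infinitePi μ := by
        simpa only [Pi.mul_apply, update_self] using
          lintegral_infinitePi_eq_lintegral_lintegral_update k (hhk.mul hf)
    _ = a * ∫⁻ η, ∫⁻ x, f (update η k (T x)) ∂μ k ∂infinitePi μ := by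
        simp_rw [hone_site]
        have hfT : Measurable fun p : (∀ i, X i) × X k ↦ f (update p.1 k (T p.2)) :=
          hf.comp (measurable_update'.comp (measurable_fst.prodMk (hT.comp measurable_snd)))
        exact lintegral_const_mul _ hfT.lintegral_prod_right'
    _ = a * ∫⁻ η, f (update η k (T (η k))) ∂infinitePi μ := by
        congr 1
        simpa only [comp_apply, update_self, update_idem] using
          (lintegral_infinitePi_eq_lintegral_lintegral_update k (hf.comp hTk)).symm
    _ = ∫⁻ η, f η ∂(a • (infinitePi μ).map fun η ↦ update η k (T (η k))) := by
        rw [lintegral_smul_measure, lintegral_map hf hTk, smul_eq_mul]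

end ProductMeasure

lemma withDensity_eq_smul_map_succ {μ : Measure ℕ} {h : ℕ → ℝ≥0∞} {a : ℝ≥0∞} (h_zero : h 0 = 0)
    (h_succ : ∀ n, h (n + 1) * μ {n + 1} = a * μ {n}) :
    μ.withDensity h = a • μ.map (· + 1) := by
  refine ext_of_singleton fun n ↦ ?_
  rw [withDensity_apply _ (measurableSet_singleton n), lintegral_singleton, Measure.smul_apply,
    map_apply (measurable_add_const 1) (measurableSet_singleton n), smul_eq_mul]
  cases n with
  | zero =>
    have hpre : (· + 1) ⁻¹' {0} = (∅ : Set ℕ) := by ext; simp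
    simp [hpre, h_zero]
  | succ n =>
    have hpre : (· + 1) ⁻¹' {n + 1} = ({n} : Set ℕ) := by ext; simp
    rw [hpre, h_succ]

lemma mul_pow_div_prod_Icc_succ {K : Type*} [Field K] {g : ℕ → K} {n : ℕ} (hg : g (n + 1) ≠ 0)
    (α : K) :
    g (n + 1) * (α ^ (n + 1) / ∏ j ∈ Finset.Icc 1 (n + 1), g j) =
      α * (α ^ n / ∏ j ∈ Finset.Icc 1 n, g j) := by
  rw [Finset.prod_Icc_succ_top (by lia), pow_succ', mul_comm _ (g (n + 1)), mul_div_assoc',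
    mul_div_mul_left _ _ hg, mul_div_assoc]

theorem computation_lemma_first_identity_general {ι E : Type*} [DecidableEq ι]
    [NormedAddCommGroup E] [NormedSpace ℝ E]
    {g : ℕ → ℝ} (hg_zero : g 0 = 0) (hg : ∀ n, 0 ≤ g n) {α : ℝ} (hα : 0 ≤ α)
    {ν : ι → Measure ℕ} [∀ i, IsProbabilityMeasure (ν i)] {Q : Measure (ι → ℕ)}
    (hQ : ∀ (s : Finset ι) (a : ι → ℕ), Q {η | ∀ i ∈ s, η i = a i} = ∏ i ∈ s, ν i {a i})
    {k : ι} (hν : ∀ n, ENNReal.ofReal (g (n + 1)) * ν k {n + 1} = ENNReal.ofReal α * ν k {n})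
    {ψ : (ι → ℕ) → E} (hψ : Integrable ψ (Q.map fun η ↦ update η k (η k + 1))) :
    Integrable (fun η ↦ g (η k) • ψ η) Q ∧
      ∫ η, g (η k) • ψ η ∂Q = α • ∫ η, ψ (update η k (η k + 1)) ∂Q := by
  have hgk : Measurable fun η : ι → ℕ ↦ ENNReal.ofReal (g (η k)) :=
    (measurable_from_nat (f := fun n ↦ ENNReal.ofReal (g n))).comp (measurable_pi_apply k)
  have hshift : Measurable fun η : ι → ℕ ↦ update η k (η k + 1) :=
    measurable_update_comp_eval (measurable_add_const 1)
  have hlt : ∀ᵐ η ∂Q, ENNReal.ofReal (g (η k)) < ∞ := .of_forall fun _ ↦ ENNReal.ofReal_lt_top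
  have hone_site : (ν k).withDensity (fun n ↦ ENNReal.ofReal (g n)) =
      ENNReal.ofReal α • (ν k).map (· + 1) :=
    withDensity_eq_smul_map_succ (by rw [hg_zero, ENNReal.ofReal_zero]) hν
  have hdensity : Q.withDensity (fun η ↦ ENNReal.ofReal (g (η k))) =
      ENNReal.ofReal α • Q.map fun η ↦ update η k (η k + 1) := by
    rw [eq_infinitePi_of_forall_cylinder_singleton hQ]
    exact infinitePi_withDensity_eval_eq_smul_map_update (μ := ν)
      (h := fun n ↦ ENNReal.ofReal (g n)) .of_discrete .of_discrete hone_site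
  constructor
  · have hint := hψ.smul_measure (c := ENNReal.ofReal α) ENNReal.ofReal_ne_top
    rw [← hdensity, integrable_withDensity_iff_integrable_smul' hgk hlt] at hint
    simpa only [ENNReal.toReal_ofReal (hg _)] using hint
  · calc ∫ η, g (η k) • ψ η ∂Q
        = ∫ η, ψ η ∂Q.withDensity fun η ↦ ENNReal.ofReal (g (η k)) := by
          rw [integral_withDensity_eq_integral_toReal_smul hgk hlt]
          simp only [ENNReal.toReal_ofReal (hg _)]
      _ = α • ∫ η, ψ (update η k (η k + 1)) ∂Q := by
          rw [hdensity, integral_smul_measure, ENNReal.toReal_ofReal hα,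
            integral_map hshift.aemeasurable hψ.aestronglyMeasurable]

/-- Let `Q_α` be the product probability measure on `Ω = ℕ^(ℤ^d)` whose
marginal at site `0` is the palm marginal `μ⁰_α` and whose marginal at every other site is
`μ_α` (the product structure is expressed through the values of `Q` on cylinder sets).
Let `k ∈ ℤ^d`, `k ≠ 0`, and let `ψ : Ω → ℝ` be bounded and measurable.  Then
`∫ g (η k) ψ(η) dQ_α(η) = α ∫ ψ(η + δ_k) dQ_α(η)`, where `(η + δ_k) i = η i + 1` if
`i = k` and `η i` otherwise. -/
theorem computation_lemma_first_identity
    (d : ℕ) (hd : 1 ≤ d)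
    (g : ℕ → ℝ) (hg0 : g 0 = 0) (hgpos : ∀ k : ℕ, 1 ≤ k → 0 < g k)
    (α : ℝ) (hα0 : 0 < α)
    (hα : ENNReal.ofReal α <
      Filter.liminf (fun k : ℕ => ENNReal.ofReal (g k)) Filter.atTop)
    (w : ℕ → ℝ) (hw : ∀ k : ℕ, w k = α ^ k / ∏ j ∈ Finset.Icc 1 k, g j)
    (Z : ℝ) (hZ : Z = ∑' k : ℕ, w k)
    (ρ : ℝ) (hρ : ρ = ∑' k : ℕ, (k : ℝ) * (w k / Z))
    -- the family of one-site marginals: palm measure at the origin, `μ_α` elsewhere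
    (ν : (Fin d → ℤ) → Measure ℕ) (hνprob : ∀ i, IsProbabilityMeasure (ν i))
    (hν0 : ∀ n : ℕ, ν 0 {n} = ENNReal.ofReal (((n : ℝ) / ρ) * (w n / Z)))
    (hνi : ∀ i : Fin d → ℤ, i ≠ 0 → ∀ n : ℕ, ν i {n} = ENNReal.ofReal (w n / Z))
    -- `Q` is the product measure `⊗_i ν i`, characterized on cylinder sets
    (Q : Measure ((Fin d → ℤ) → ℕ)) (hQprob : IsProbabilityMeasure Q)
    (hQ : ∀ (s : Finset (Fin d → ℤ)) (a : (Fin d → ℤ) → ℕ),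
      Q {η | ∀ i ∈ s, η i = a i} = ∏ i ∈ s, ν i {a i})
    (k : Fin d → ℤ) (hk : k ≠ 0)
    (ψ : ((Fin d → ℤ) → ℕ) → ℝ) (hψmeas : Measurable ψ)
    (hψbdd : ∃ C : ℝ, ∀ η, |ψ η| ≤ C) :
    ∫ η, g (η k) * ψ η ∂Q =
      α * ∫ η, ψ (Function.update η k (η k + 1)) ∂Q := by
  obtain ⟨C, hC⟩ := hψbdd
  have hg : ∀ n, 0 ≤ g n
    | 0 => hg0.ge
    | n + 1 => (hgpos (n + 1) n.succ_pos).le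
  have hbalance (n : ℕ) :
      ENNReal.ofReal (g (n + 1)) * ν k {n + 1} = ENNReal.ofReal α * ν k {n} := by
    rw [hνi k hk, hνi k hk, ← ENNReal.ofReal_mul (hg _), ← ENNReal.ofReal_mul hα0.le,
      mul_div_assoc', mul_div_assoc', hw, hw,
      mul_pow_div_prod_Icc_succ (hgpos _ n.succ_pos).ne']
  exact (computation_lemma_first_identity_general hg0 hg hα0.le hQ hbalance
    (.of_bound hψmeas.aestronglyMeasurable C (.of_forall hC))).2
end

section
/- Let j ∈ ℤ^d with j ≠ 0 and let ψ : Ω → ℝ be bounded and measurable. Then ∫ (g(η_0)/η_0) ψ(η) dQ_α(η) = ∫ (g(η_0)/η_0) ψ(T_j η) dQ_α(η), where T_j η is the configuration (T_j η)_i = η_{i+j} + 1_{[i = 0]} − 1_{[i = −j]} (i.e. the tagged particle at the origin jumps by j and the frame is shifted to its new position; T_j η is a well-defined element of ℕ^{ℤ^d} whenever η_0 ≥ 1, which holds Q_α-almost surely), and g(η_0)/η_0 is interpreted as 0 when η_0 = 0. -/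
open MeasureTheory

/-!
Let `P` be the product measure with marginal `μ_α` at every site, and let `A` add one particle at
the origin. The identity `g (k + 1) * w (k + 1) = α * w k` says that the palm marginal, reweighted
by `g k / k`, is `α / ρ` times the law of `k + 1` for `k` drawn from `μ_α`; hence `Q_α`, reweighted
by `g (η 0) / η 0`, is `α / ρ` times the image of `P` under `A`. Since `T_j ∘ A = A ∘ τ_j` and `P`
is invariant under the shift `τ_j`, the reweighted measure is invariant under `T_j`.
-/

lemma integral_withDensity_ofReal {Ω E : Type*} [MeasurableSpace Ω] [NormedAddCommGroup E]
    [NormedSpace ℝ E] (μ : Measure Ω) {f : Ω → ℝ} (hf : Measurable f) (hf0 : ∀ x, 0 ≤ f x)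
    (ψ : Ω → E) :
    ∫ x, ψ x ∂μ.withDensity (fun x ↦ ENNReal.ofReal (f x)) = ∫ x, f x • ψ x ∂μ := by
  rw [integral_withDensity_eq_integral_toReal_smul hf.ennreal_ofReal (by simp)]
  simp only [ENNReal.toReal_ofReal (hf0 _)]

lemma withDensity_map_eq_map_withDensity_comp {Ω Ω' : Type*} [MeasurableSpace Ω]
    [MeasurableSpace Ω'] (μ : Measure Ω) {φ : Ω → Ω'} (hφ : Measurable φ)
    {f : Ω' → ENNReal} (hf : Measurable f) :
    (μ.map φ).withDensity f = (μ.withDensity (f ∘ φ)).map φ := by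
  ext s hs
  rw [withDensity_apply _ hs, Measure.map_apply hφ hs, withDensity_apply _ (hφ hs),
    setLIntegral_map hs hf hφ, Function.comp_def]

section ProductMeasure

open Measure

variable {ι : Type*} {X : ι → Type*} [∀ i, MeasurableSpace (X i)]

theorem eq_infinitePi_of_forall_singleton [∀ i, Countable (X i)]
    [∀ i, MeasurableSingletonClass (X i)] {μ : ∀ i, Measure (X i)}
    [∀ i, IsProbabilityMeasure (μ i)] {Q : Measure (∀ i, X i)}
    (hQ : ∀ (s : Finset ι) (a : ∀ i, X i), Q {x | ∀ i ∈ s, x i = a i} = ∏ i ∈ s, μ i {a i}) :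
    Q = infinitePi μ := by
  classical
  refine IsProjectiveLimit.unique (fun s ↦ ext_of_singleton fun b ↦ ?_)
    (isProjectiveLimit_infinitePi μ)
  have (i : ι) : Nonempty (X i) := nonempty_of_isProbabilityMeasure (μ i)
  obtain ⟨a, rfl⟩ : ∃ a : ∀ i, X i, s.restrict a = b :=
    Subtype.exists_pi_extension b
  have hcyl : s.restrict ⁻¹' {s.restrict a} = {x | ∀ i ∈ s, x i = a i} := by
    ext x
    simp [funext_iff]
  rw [map_apply (by fun_prop) (measurableSet_singleton _), hcyl, hQ, pi_singleton]
  exact (Finset.prod_coe_sort s fun i ↦ μ i {a i}).symm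

theorem map_update_prod_infinitePi [DecidableEq ι] {μ ν : ∀ i, Measure (X i)}
    [∀ i, IsProbabilityMeasure (μ i)] [∀ i, IsProbabilityMeasure (ν i)] {i : ι}
    (h : ∀ k ≠ i, ν k = μ k) :
    ((infinitePi μ).prod (ν i)).map (fun p ↦ Function.update p.1 i p.2) = infinitePi ν := by
  refine eq_infinitePi ν fun s t ht ↦ ?_
  have hbox : (fun p : (∀ k, X k) × X i ↦ Function.update p.1 i p.2) ⁻¹' (s : Set ι).pi t =
      ((s.erase i : Finset ι) : Set ι).pi t ×ˢ (if i ∈ s then t i else Set.univ) := by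
    ext ⟨x, y⟩
    simp only [Set.mem_preimage, Set.mem_pi, Set.mem_prod, Finset.mem_coe, Finset.mem_erase]
    constructor
    · intro hx
      refine ⟨fun k hk ↦ by simpa [hk.1] using hx k hk.2, ?_⟩
      split_ifs with hi
      · simpa using hx i hi
      · trivial
    · rintro ⟨hx, hy⟩ k hk
      rcases eq_or_ne k i with rfl | hki
      · simpa [hk] using hy
      · simpa [hki] using hx k ⟨hki, hk⟩
  have herase : ∏ k ∈ s.erase i, μ k (t k) = ∏ k ∈ s.erase i, ν k (t k) :=
    Finset.prod_congr rfl fun k hk ↦ by rw [h k (Finset.ne_of_mem_erase hk)]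
  rw [map_apply measurable_update' (.pi s.countable_toSet fun k _ ↦ ht k), hbox, prod_prod,
    infinitePi_pi _ fun k _ ↦ ht k, herase]
  split_ifs with hi
  · exact Finset.prod_erase_mul s _ hi
  · rw [measure_univ, mul_one, Finset.erase_eq_of_notMem hi]

theorem withDensity_infinitePi_eval [DecidableEq ι] {μ ν : ∀ i, Measure (X i)}
    [∀ i, IsProbabilityMeasure (μ i)] [∀ i, IsProbabilityMeasure (ν i)] {i : ι}
    (h : ∀ k ≠ i, ν k = μ k) {f : X i → ENNReal} (hf : Measurable f) {φ : X i → X i}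
    (hφ : Measurable φ) {c : ENNReal} (hfφ : (ν i).withDensity f = c • (μ i).map φ) :
    (infinitePi ν).withDensity (fun x ↦ f (x i)) =
      c • (infinitePi μ).map (fun x ↦ Function.update x i (φ (x i))) := by
  let U : (∀ k, X k) × X i → ∀ k, X k := fun p ↦ Function.update p.1 i p.2
  have hU : Measurable U := measurable_update'
  have hfU : (fun x : ∀ k, X k ↦ f (x i)) ∘ U = fun p ↦ f p.2 := by ext; simp [U]
  have hφU : U ∘ Prod.map id φ = (fun x ↦ Function.update x i (φ (x i))) ∘ U := by ext; simp [U]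
  calc (infinitePi ν).withDensity (fun x ↦ f (x i))
      = (((infinitePi μ).prod (ν i)).map U).withDensity (fun x ↦ f (x i)) := by
        rw [map_update_prod_infinitePi h]
    _ = ((infinitePi μ).prod ((ν i).withDensity f)).map U := by
        rw [withDensity_map_eq_map_withDensity_comp _ hU (by fun_prop), hfU,
          prod_withDensity_right hf]
    _ = c • (((infinitePi μ).prod (μ i)).map (Prod.map id φ)).map U := by
        rw [hfφ, prod_smul_right, Measure.map_smul, ← map_prod_map _ _ measurable_id hφ, map_id]
    _ = c • (((infinitePi μ).prod (μ i)).map U).map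
          (fun x ↦ Function.update x i (φ (x i))) := by
        rw [map_map hU (by fun_prop), hφU, map_map (by fun_prop) hU]
    _ = c • (infinitePi μ).map (fun x ↦ Function.update x i (φ (x i))) := by
        rw [map_update_prod_infinitePi fun _ _ ↦ rfl]

theorem measurePreserving_comp_equiv_infinitePi {κ Y : Type*} [MeasurableSpace Y] (μ : Measure Y)
    [IsProbabilityMeasure μ] (e : κ ≃ ι) :
    MeasurePreserving (fun (x : ι → Y) ↦ x ∘ e) (infinitePi fun _ ↦ μ) (infinitePi fun _ ↦ μ) where
  measurable := by fun_prop
  map_eq := by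
    have hcongr : (fun x : ι → Y ↦ x ∘ e) = MeasurableEquiv.piCongrLeft (fun _ ↦ Y) e.symm := by
      ext x k
      obtain ⟨i, rfl⟩ := e.symm.surjective k
      simp [MeasurableEquiv.coe_piCongrLeft, Equiv.piCongrLeft_apply_apply (fun _ ↦ Y)]
    rw [hcongr]
    exact infinitePi_map_piCongrLeft (fun _ : κ ↦ μ) e.symm

end ProductMeasure

namespace ZeroRange

section SingleSite

variable (g : ℕ → ℝ) (α : ℝ)

/-- The unnormalised weight `w(k) = α ^ k / (g 1 ⋯ g k)` of `k` particles at a site of a zero-range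
process with jump rates `g` and fugacity `α`. -/
noncomputable def weight (k : ℕ) : ℝ := α ^ k / ∏ i ∈ Finset.Icc 1 k, g i

/-- The normalising constant `Z_α` of the weights; it is `0` if the weights are not summable. -/
noncomputable def partitionFunction : ℝ := ∑' k, weight g α k

/-- The mass `μ_α(k)` that the invariant one-site marginal gives to `k`. -/
noncomputable def siteMass (k : ℕ) : ℝ := weight g α k / partitionFunction g α

/-- The particle density `ρ(α)`, i.e. the mean of `μ_α`; it is `0` if this mean is infinite. -/
noncomputable def density : ℝ := ∑' k : ℕ, (k : ℝ) * siteMass g α k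

/-- The mass `μ⁰_α(k)` that the size-biased (palm) version of `μ_α` gives to `k`; it is the law of
the number of particles at the site of a tagged particle. -/
noncomputable def palmMass (k : ℕ) : ℝ := (k : ℝ) / density g α * siteMass g α k

variable {g α}

lemma weight_succ (hg : ∀ k, 1 ≤ k → 0 < g k) (k : ℕ) :
    g (k + 1) * weight g α (k + 1) = α * weight g α k := by
  have hgk : g (k + 1) ≠ 0 := (hg _ k.succ_pos).ne'
  rw [weight, weight, Finset.prod_Icc_succ_top k.succ_pos]
  field_simp
  ring

lemma weight_nonneg (hg : ∀ k, 1 ≤ k → 0 < g k) (hα : 0 ≤ α) (k : ℕ) : 0 ≤ weight g α k :=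
  div_nonneg (pow_nonneg hα k)
    (Finset.prod_nonneg fun i hi ↦ (hg i (Finset.mem_Icc.1 hi).1).le)

lemma siteMass_nonneg (hg : ∀ k, 1 ≤ k → 0 < g k) (hα : 0 ≤ α) (k : ℕ) : 0 ≤ siteMass g α k :=
  div_nonneg (weight_nonneg hg hα k) (tsum_nonneg (weight_nonneg hg hα))

lemma density_nonneg (hg : ∀ k, 1 ≤ k → 0 < g k) (hα : 0 ≤ α) : 0 ≤ density g α :=
  tsum_nonneg fun k ↦ mul_nonneg k.cast_nonneg (siteMass_nonneg hg hα k)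

lemma div_mul_palmMass_succ (hg : ∀ k, 1 ≤ k → 0 < g k) (k : ℕ) :
    g (k + 1) / (k + 1 : ℕ) * palmMass g α (k + 1) = α / density g α * siteMass g α k := by
  have hk : ((k + 1 : ℕ) : ℝ) ≠ 0 := by positivity
  calc g (k + 1) / (k + 1 : ℕ) * palmMass g α (k + 1)
      = g (k + 1) * weight g α (k + 1) / density g α / partitionFunction g α := by
        rw [palmMass, siteMass]; field_simp
    _ = α / density g α * siteMass g α k := by
        rw [weight_succ hg, siteMass]; ring

theorem withDensity_palm_eq_smul_map_succ (hg : ∀ k, 1 ≤ k → 0 < g k) (hα : 0 ≤ α)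
    {μ μ₀ : Measure ℕ} (hμ : ∀ n, μ {n} = ENNReal.ofReal (siteMass g α n))
    (hμ₀ : ∀ n, μ₀ {n} = ENNReal.ofReal (palmMass g α n)) :
    μ₀.withDensity (fun k ↦ ENNReal.ofReal (g k / k)) =
      ENNReal.ofReal (α / density g α) • μ.map Nat.succ := by
  refine Measure.ext_of_singleton fun n ↦ ?_
  rw [withDensity_apply _ (measurableSet_singleton n), lintegral_singleton, hμ₀,
    Measure.smul_apply, Measure.map_apply (by fun_prop) (measurableSet_singleton n), smul_eq_mul]
  cases n with
  | zero =>
    have hpre : Nat.succ ⁻¹' {0} = ∅ := by ext; simp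
    simp [hpre]
  | succ k =>
    have hpre : Nat.succ ⁻¹' {k + 1} = {k} := by ext; simp
    have hrate : 0 ≤ g (k + 1) / (k + 1 : ℕ) := div_nonneg (hg _ k.succ_pos).le (Nat.cast_nonneg _)
    rw [hpre, hμ, ← ENNReal.ofReal_mul hrate, div_mul_palmMass_succ hg,
      ENNReal.ofReal_mul (div_nonneg hα (density_nonneg hg hα))]

end SingleSite

section TagJump

variable {G : Type*} [AddGroup G] [DecidableEq G]

/-- The configuration `η` with one more particle at the origin. -/
def addParticle (η : G → ℕ) (i : G) : ℕ := η i + if i = 0 then 1 else 0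

/-- The configuration `T_j η` seen from the tagged particle after it has jumped from the origin by
`j`. The subtraction is truncated, so this is the intended configuration only when `η 0 ≠ 0`. -/
def tagJump (j : G) (η : G → ℕ) (i : G) : ℕ :=
  η (i + j) + (if i = 0 then 1 else 0) - (if i = -j then 1 else 0)

lemma addParticle_eq_update (η : G → ℕ) : addParticle η = Function.update η 0 (η 0).succ := by
  ext i
  by_cases hi : i = 0 <;> simp [addParticle, hi]

lemma measurable_addParticle : Measurable (addParticle : (G → ℕ) → G → ℕ) := by
  unfold addParticle
  fun_prop

lemma measurable_tagJump (j : G) : Measurable (tagJump j) := by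
  unfold tagJump
  fun_prop

lemma tagJump_addParticle (j : G) (η : G → ℕ) :
    tagJump j (addParticle η) = addParticle (η ∘ Equiv.addRight j) := by
  ext i
  have hij : i + j = 0 ↔ i = -j := add_eq_zero_iff_eq_neg
  simp only [tagJump, addParticle, hij, Function.comp_apply, Equiv.coe_addRight]
  rw [Nat.add_right_comm, Nat.add_sub_cancel]

theorem measurePreserving_tagJump_map_addParticle (μ : Measure ℕ) [IsProbabilityMeasure μ] (j : G) :
    MeasurePreserving (tagJump j) ((Measure.infinitePi fun _ ↦ μ).map addParticle)
      ((Measure.infinitePi fun _ ↦ μ).map addParticle) := by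
  have hshift := measurePreserving_comp_equiv_infinitePi μ (Equiv.addRight j)
  refine ⟨measurable_tagJump j, ?_⟩
  have hcomm : tagJump j ∘ addParticle = addParticle ∘ (· ∘ Equiv.addRight j) :=
    funext (tagJump_addParticle j)
  rw [Measure.map_map (measurable_tagJump j) measurable_addParticle, hcomm,
    ← Measure.map_map measurable_addParticle hshift.measurable, hshift.map_eq]

theorem measurePreserving_tagJump_withDensity {g : ℕ → ℝ} (hg : ∀ k, 1 ≤ k → 0 < g k) {α : ℝ}
    (hα : 0 ≤ α) {ν : G → Measure ℕ} [∀ i, IsProbabilityMeasure (ν i)]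
    (hν0 : ∀ n, ν 0 {n} = ENNReal.ofReal (palmMass g α n))
    (hνi : ∀ i ≠ 0, ∀ n, ν i {n} = ENNReal.ofReal (siteMass g α n)) {j : G} (hj : j ≠ 0) :
    MeasurePreserving (tagJump j)
      ((Measure.infinitePi ν).withDensity fun η ↦ ENNReal.ofReal (g (η 0) / η 0))
      ((Measure.infinitePi ν).withDensity fun η ↦ ENNReal.ofReal (g (η 0) / η 0)) := by
  have hν : ∀ i ≠ 0, ν i = ν j := fun i hi ↦
    Measure.ext_of_singleton fun n ↦ by rw [hνi i hi, hνi j hj]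
  have hreweighted : (Measure.infinitePi ν).withDensity
      (fun η ↦ ENNReal.ofReal (g (η 0) / η 0)) = ENNReal.ofReal (α / density g α) •
        (Measure.infinitePi fun _ ↦ ν j).map addParticle := by
    rw [funext addParticle_eq_update]
    exact withDensity_infinitePi_eval (f := fun k ↦ ENNReal.ofReal (g k / k)) hν .of_discrete
      .of_discrete (withDensity_palm_eq_smul_map_succ hg hα (hνi j hj) hν0)
  rw [hreweighted]
  exact (measurePreserving_tagJump_map_addParticle (ν j) j).smul_measure _

end TagJump

end ZeroRange

open ZeroRange in
theorem computation_lemma_third_identity_general {G E : Type*} [AddGroup G] [DecidableEq G]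
    [NormedAddCommGroup E] [NormedSpace ℝ E] {g : ℕ → ℝ} (hg0 : g 0 = 0)
    (hgpos : ∀ k, 1 ≤ k → 0 < g k) {α : ℝ} (hα : 0 ≤ α) {ν : G → Measure ℕ}
    [∀ i, IsProbabilityMeasure (ν i)]
    (hν0 : ∀ n, ν 0 {n} = ENNReal.ofReal (palmMass g α n))
    (hνi : ∀ i ≠ 0, ∀ n, ν i {n} = ENNReal.ofReal (siteMass g α n)) {j : G} (hj : j ≠ 0)
    {ψ : (G → ℕ) → E} (hψ : AEStronglyMeasurable ψ (Measure.infinitePi ν)) :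
    ∫ η, (g (η 0) / (η 0 : ℝ)) • ψ η ∂Measure.infinitePi ν =
      ∫ η, (g (η 0) / (η 0 : ℝ)) • ψ (tagJump j η) ∂Measure.infinitePi ν := by
  have hT := measurePreserving_tagJump_withDensity hgpos hα hν0 hνi hj
  have hg : ∀ k, 0 ≤ g k := by
    rintro (_ | k)
    exacts [hg0.ge, (hgpos _ k.succ_pos).le]
  have hrate : Measurable fun η : G → ℕ ↦ g (η 0) / (η 0 : ℝ) :=
    (Measurable.of_discrete (f := fun k : ℕ ↦ g k / k)).comp (measurable_pi_apply 0)
  have hrate0 (η : G → ℕ) : 0 ≤ g (η 0) / (η 0 : ℝ) := div_nonneg (hg _) (Nat.cast_nonneg _)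
  have hψT := hψ.mono_ac
    (withDensity_absolutelyContinuous _ fun η ↦ ENNReal.ofReal (g (η 0) / η 0))
  rw [← hT.map_eq] at hψT
  rw [← integral_withDensity_ofReal _ hrate hrate0, ← integral_withDensity_ofReal _ hrate hrate0,
    ← integral_map hT.measurable.aemeasurable hψT, hT.map_eq]

/-- Let `Q_α` be the product probability measure on `Ω = ℕ^(ℤ^d)` whose
marginal at site `0` is the palm marginal `μ⁰_α` and whose marginal at every other site is
`μ_α`.  Let `j ∈ ℤ^d`, `j ≠ 0`, and let `ψ : Ω → ℝ` be bounded and measurable.  Then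
`∫ (g (η 0)/η 0) ψ(η) dQ_α(η) = ∫ (g (η 0)/η 0) ψ(T_j η) dQ_α(η)`, where
`(T_j η) i = η (i+j) + 1_{i=0} − 1_{i=−j}` (the tagged particle at the origin jumps by `j`
and the frame is shifted to its new position; with truncated `ℕ`-subtraction this is a
well-defined element of `ℕ^(ℤ^d)`, and it agrees with the intended configuration whenever
`η 0 ≥ 1`, which holds `Q_α`-a.s.), and `g (η 0)/η 0` is interpreted as `0` when
`η 0 = 0` (Lean's convention `x / 0 = 0` together with `g 0 = 0` achieves this). -/
theorem computation_lemma_third_identity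
    (d : ℕ) (hd : 1 ≤ d)
    (g : ℕ → ℝ) (hg0 : g 0 = 0) (hgpos : ∀ k : ℕ, 1 ≤ k → 0 < g k)
    (α : ℝ) (hα0 : 0 < α)
    (hα : ENNReal.ofReal α <
      Filter.liminf (fun k : ℕ => ENNReal.ofReal (g k)) Filter.atTop)
    (w : ℕ → ℝ) (hw : ∀ k : ℕ, w k = α ^ k / ∏ j ∈ Finset.Icc 1 k, g j)
    (Z : ℝ) (hZ : Z = ∑' k : ℕ, w k)
    (ρ : ℝ) (hρ : ρ = ∑' k : ℕ, (k : ℝ) * (w k / Z))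
    (ν : (Fin d → ℤ) → Measure ℕ) (hνprob : ∀ i, IsProbabilityMeasure (ν i))
    (hν0 : ∀ n : ℕ, ν 0 {n} = ENNReal.ofReal (((n : ℝ) / ρ) * (w n / Z)))
    (hνi : ∀ i : Fin d → ℤ, i ≠ 0 → ∀ n : ℕ, ν i {n} = ENNReal.ofReal (w n / Z))
    (Q : Measure ((Fin d → ℤ) → ℕ)) (hQprob : IsProbabilityMeasure Q)
    (hQ : ∀ (s : Finset (Fin d → ℤ)) (a : (Fin d → ℤ) → ℕ),
      Q {η | ∀ i ∈ s, η i = a i} = ∏ i ∈ s, ν i {a i})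
    (j : Fin d → ℤ) (hj : j ≠ 0)
    (T : ((Fin d → ℤ) → ℕ) → ((Fin d → ℤ) → ℕ))
    (hT : ∀ η i, T η i =
      η (i + j) + (if i = 0 then 1 else 0) - (if i = -j then 1 else 0))
    (ψ : ((Fin d → ℤ) → ℕ) → ℝ) (hψmeas : Measurable ψ)
    (hψbdd : ∃ C : ℝ, ∀ η, |ψ η| ≤ C) :
    ∫ η, (g (η 0) / (η 0 : ℝ)) * ψ η ∂Q =
      ∫ η, (g (η 0) / (η 0 : ℝ)) * ψ (T η) ∂Q := by
  obtain rfl : w = ZeroRange.weight g α := funext hw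
  obtain rfl : T = ZeroRange.tagJump j := funext₂ hT
  subst hZ hρ
  rw [eq_infinitePi_of_forall_singleton hQ]
  exact computation_lemma_third_identity_general hg0 hgpos hα0.le hν0 hνi hj
    hψmeas.aestronglyMeasurable
end
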